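/- Let G be a tree (a connected simple graph with no cycles) and let F be a field of characteristic not 2. Then mr⁻(F,G) = 2·match(G) = MR⁻(F,G). -/

import Mathlib

/-!
Deleting a pendant edge together with its ends lowers the rank by two and the matching number by
one. If the vertex `v` of `G` has `u` as its only neighbour, then isolating `u`
(deleting all edges at `u`, which isolates `v` as well) lowers the matching number by exactly one
(`IsMatchingSet.insert_pendant`, `IsMatchingSet.ncard_le_deleteIncidenceSet`) and, since
`A u v ≠ 0` and `A v u ≠ 0` in any skew matrix `A` of `G`, lowers the rank of `A` by exactly two
(`rank_eq_rank_isolate_add_two`). A forest with at least one edge has such a vertex `v`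
(`exists_pendant`), and stays a forest on the same vertex set after the deletion, so by induction on
the number of edges *every* skew matrix of a forest has rank twice the matching number. Hence the
set of attained ranks is a singleton; it is nonempty because orienting the edges of `G` gives
a skew matrix. Characteristic different from `2` enters only to make diagonals vanish.
-/

open Matrix

/-- `A` is a skew-symmetric matrix over `F` whose off-diagonal zero–nonzero
pattern is described by the graph `G`. -/
def SkewDescribes (F : Type) [Field F] {V : Type}
    (G : SimpleGraph V) (A : Matrix V V F) : Prop :=
  Aᵀ = -A ∧ ∀ i j : V, i ≠ j → (A i j ≠ 0 ↔ G.Adj i j)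

/-- The minimum skew rank of a graph `G` over a field `F`. -/
noncomputable def minSkewRank (F : Type) [Field F] {V : Type} [Fintype V]
    (G : SimpleGraph V) : ℕ :=
  sInf {r : ℕ | ∃ A : Matrix V V F, SkewDescribes F G A ∧ A.rank = r}

/-- The maximum skew rank of a graph `G` over a field `F`. -/
noncomputable def maxSkewRank (F : Type) [Field F] {V : Type} [Fintype V]
    (G : SimpleGraph V) : ℕ :=
  sSup {r : ℕ | ∃ A : Matrix V V F, SkewDescribes F G A ∧ A.rank = r}

/-- `M` is a matching of `G`: a set of pairwise disjoint edges of `G`. -/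
def IsMatchingSet {V : Type} (G : SimpleGraph V) (M : Set (Sym2 V)) : Prop :=
  M ⊆ G.edgeSet ∧ ∀ e ∈ M, ∀ f ∈ M, e ≠ f → ∀ v : V, v ∈ e → v ∉ f

/-- The matching number of `G`: the maximum size of a set of pairwise disjoint
edges of `G`. -/
noncomputable def matchingNumber {V : Type} (G : SimpleGraph V) : ℕ :=
  sSup {k : ℕ | ∃ M : Set (Sym2 V), IsMatchingSet G M ∧ M.ncard = k}

/-! ### Skew matrices of a graph -/

theorem SkewDescribes.swap {F : Type} [Field F] {V : Type} {G : SimpleGraph V}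
    {A : Matrix V V F} (hA : SkewDescribes F G A) (i j : V) : A j i = -A i j := by
  simpa using congrFun (congrFun hA.1 i) j

theorem SkewDescribes.diag {F : Type} [Field F] (hF : (2 : F) ≠ 0) {V : Type}
    {G : SimpleGraph V} {A : Matrix V V F} (hA : SkewDescribes F G A) (i : V) : A i i = 0 := by
  have h : 2 * A i i = 0 := by linear_combination hA.swap i i
  exact (mul_eq_zero.mp h).resolve_left hF

theorem SkewDescribes.eq_zero_of_not_adj {F : Type} [Field F] (hF : (2 : F) ≠ 0) {V : Type}
    {G : SimpleGraph V} {A : Matrix V V F} (hA : SkewDescribes F G A) {i j : V}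
    (h : ¬ G.Adj i j) : A i j = 0 := by
  by_cases hij : i = j
  · subst hij
    exact hA.diag hF i
  · by_contra h0
    exact h ((hA.2 i j hij).1 h0)

theorem exists_skewDescribes (F : Type) [Field F] {V : Type} (G : SimpleGraph V) :
    ∃ A : Matrix V V F, SkewDescribes F G A := by
  classical
  obtain ⟨_⟩ : Nonempty (LinearOrder V) := ⟨linearOrderOfSTO WellOrderingRel⟩
  -- Orient every edge from its smaller to its larger end.
  refine ⟨Matrix.of fun i j => if G.Adj i j then (if i < j then 1 else -1) else 0, ?_, ?_⟩
  · ext i j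
    simp only [Matrix.transpose_apply, Matrix.neg_apply, Matrix.of_apply, G.adj_comm j i]
    by_cases h : G.Adj i j
    · rcases lt_or_gt_of_ne h.ne with hlt | hlt <;> simp [h, hlt, hlt.not_gt]
    · simp [h]
  · intro i j _
    by_cases h : G.Adj i j
    · simp only [Matrix.of_apply, h, if_true]
      split_ifs <;> simp
    · simp [h]

/-! ### Pendant edges and matchings -/

/-- A finite forest with an edge has a leaf: an end of a longest path. -/
theorem exists_pendant {V : Type} [Finite V] {G : SimpleGraph V} (hG : G.IsAcyclic)
    {a b : V} (hab : G.Adj a b) : ∃ v u, G.Adj v u ∧ ∀ w, G.Adj v w → w = u := by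
  classical
  have : Nonempty V := ⟨a⟩
  have ⟨v, w, p, hp, hmax⟩ := SimpleGraph.Walk.exists_isPath_forall_isPath_length_le_length G
  have hnil : ¬ p.Nil := by
    intro hn
    have h1 := hmax a b (SimpleGraph.Walk.cons hab SimpleGraph.Walk.nil) (by simp [hab.ne])
    have h0 : p.length = 0 := SimpleGraph.Walk.length_eq_zero_iff.mpr hn
    simp [h0] at h1
  refine ⟨v, p.snd, p.adj_snd hnil, fun w hadj ↦ ?_⟩
  apply hG.eq_snd_of_adj_start hp hadj
  by_contra hw
  have h1 := hmax _ _ (p.cons hadj.symm) (hp.cons hw)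
  simp at h1

theorem IsMatchingSet.insert_pendant {V : Type} [Finite V] {G : SimpleGraph V} {v u : V}
    (hvu : G.Adj v u) (hv : ∀ w, G.Adj v w → w = u) {M : Set (Sym2 V)}
    (hM : IsMatchingSet (G.deleteIncidenceSet u) M) :
    IsMatchingSet G (insert s(v, u) M) ∧ (insert s(v, u) M).ncard = M.ncard + 1 := by
  have hu : ∀ e ∈ M, u ∉ e ∧ v ∉ e := by
    intro e he
    have h := hM.1 he
    induction e with
    | h x y =>
      rw [SimpleGraph.mem_edgeSet, SimpleGraph.deleteIncidenceSet_adj] at h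
      obtain ⟨hxy, hx, hy⟩ := h
      simp only [Sym2.mem_iff, not_or]
      refine ⟨⟨hx.symm, hy.symm⟩, ?_, ?_⟩
      · rintro rfl
        exact hy (hv _ hxy)
      · rintro rfl
        exact hx (hv _ hxy.symm)
  refine ⟨⟨?_, ?_⟩, ?_⟩
  · intro e he
    rcases he with rfl | he
    · exact hvu
    · exact SimpleGraph.edgeSet_mono (G.deleteIncidenceSet_le u) (hM.1 he)
  · rintro e (rfl | he) f (rfl | hf) hne w hw hw'
    · exact hne rfl
    · rcases Sym2.mem_iff.mp hw with rfl | rfl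
      · exact (hu f hf).2 hw'
      · exact (hu f hf).1 hw'
    · rcases Sym2.mem_iff.mp hw' with rfl | rfl
      · exact (hu e he).2 hw
      · exact (hu e he).1 hw
    · exact hM.2 e he f hf hne w hw hw'
  · exact Set.ncard_insert_of_notMem (fun h => (hu _ h).1 (Sym2.mem_mk_right v u))

theorem IsMatchingSet.ncard_le_deleteIncidenceSet {V : Type} [Finite V] {G : SimpleGraph V}
    (u : V) {M : Set (Sym2 V)} (hM : IsMatchingSet G M) :
    ∃ M', IsMatchingSet (G.deleteIncidenceSet u) M' ∧ M.ncard ≤ M'.ncard + 1 := by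
  refine ⟨M \ {e ∈ M | u ∈ e}, ⟨?_, ?_⟩, ?_⟩
  · intro e he
    rw [SimpleGraph.edgeSet_deleteIncidenceSet]
    exact ⟨hM.1 he.1, fun h => he.2 ⟨he.1, h.2⟩⟩
  · intro e he f hf
    exact hM.2 e he.1 f hf.1
  · have h1 : {e ∈ M | u ∈ e}.ncard ≤ 1 := by
      rw [Set.ncard_le_one_iff]
      intro e f he hf
      by_contra hne
      exact hM.2 e he.1 f hf.1 hne u he.2 hf.2
    have h2 := Set.le_ncard_sdiff {e ∈ M | u ∈ e} M
    omega

/-! ### Rank after isolating a vertex -/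

/-- The matrix obtained from `A` by replacing row and column `u` with zeros. -/
noncomputable def isolate {F : Type} [Field F] {V : Type} (A : Matrix V V F) (u : V) :
    Matrix V V F :=
  open Classical in Matrix.of fun i j => if i = u ∨ j = u then 0 else A i j

theorem SkewDescribes.isolate {F : Type} [Field F] {V : Type} {G : SimpleGraph V}
    {A : Matrix V V F} (hA : SkewDescribes F G A) (u : V) :
    SkewDescribes F (G.deleteIncidenceSet u) (isolate A u) := by
  constructor
  · ext i j
    have := hA.swap i j
    simp only [_root_.isolate, Matrix.of_apply, Matrix.transpose_apply, Matrix.neg_apply]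
    split_ifs <;> simp_all
  · intro i j hij
    rw [SimpleGraph.deleteIncidenceSet_adj, ← hA.2 i j hij]
    simp only [_root_.isolate, Matrix.of_apply]
    split_ifs <;> tauto

/-- If the only nonzero entries of row `v` and of column `v` of `A` are `A v u` and `A u v`,
clearing row and column `u` lowers the rank by two: `ker A` is the kernel of the surjection
`x ↦ (x u, (A x) u)` from `ker (isolate A u)` onto `F²`. -/
theorem rank_eq_rank_isolate_add_two {F : Type} [Field F] {V : Type} [Fintype V]
    {A : Matrix V V F} {u v : V} (huv : A u v ≠ 0) (hvu : A v u ≠ 0) (huu : A u u = 0)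
    (hrow : ∀ w, w ≠ u → A v w = 0) (hcol : ∀ w, w ≠ u → A w v = 0) :
    A.rank = (isolate A u).rank + 2 := by
  classical
  have hne : v ≠ u := by
    rintro rfl
    exact huv huu
  set B := isolate A u with hB
  -- Outside the row `u`, the products with `A` and with `B` differ by the column `u` of `A`.
  have hmul : ∀ x : V → F, ∀ i, i ≠ u → (A *ᵥ x) i = (B *ᵥ x) i + A i u * x u := by
    intro x i hi
    have h1 : ∀ j, A i j * x j = B i j * x j + if j = u then A i u * x u else 0 := by
      intro j
      by_cases hj : j = u
      · subst hj
        simp [hB, isolate]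
      · simp [hB, isolate, hi, hj]
    simp only [Matrix.mulVec, dotProduct]
    rw [Finset.sum_congr rfl fun j _ => h1 j, Finset.sum_add_distrib]
    simp
  have hBu : ∀ x : V → F, (B *ᵥ x) u = 0 := by
    intro x
    simp [Matrix.mulVec, dotProduct, hB, isolate]
  have hAv : ∀ x : V → F, (A *ᵥ x) v = A v u * x u := by
    intro x
    simp only [Matrix.mulVec, dotProduct]
    exact Finset.sum_eq_single u (fun w _ hw => by simp [hrow w hw]) (by simp)
  let φ : (V → F) →ₗ[F] F × F :=
    (LinearMap.proj u).prod ((LinearMap.proj u).comp A.mulVecLin)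
  have hφ : ∀ x, φ x = (x u, (A *ᵥ x) u) := fun x => rfl
  have hker : LinearMap.ker A.mulVecLin = LinearMap.ker B.mulVecLin ⊓ LinearMap.ker φ := by
    ext x
    simp only [Submodule.mem_inf, LinearMap.mem_ker, Matrix.mulVecLin_apply, hφ, Prod.mk_eq_zero]
    constructor
    · intro h
      have hxu : x u = 0 := by
        have := hAv x
        rw [h] at this
        simpa [hvu] using this
      refine ⟨?_, hxu, by rw [h]; rfl⟩
      ext i
      by_cases hi : i = u
      · subst hi
        exact hBu x
      · have := hmul x i hi
        rw [h, hxu] at this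
        simpa using this.symm
    · rintro ⟨h, hxu, hu⟩
      ext i
      by_cases hi : i = u
      · subst hi
        exact hu
      · rw [hmul x i hi, h, hxu]
        simp
  let ψ : LinearMap.ker B.mulVecLin →ₗ[F] F × F := φ.domRestrict _
  have hsurj : Function.Surjective ψ := by
    rintro ⟨a, b⟩
    let x : V → F := Pi.single u a + Pi.single v (b / A u v)
    have hx : B *ᵥ x = 0 := by
      ext i
      simp only [x, Matrix.mulVec_add, Matrix.mulVec_single, Pi.add_apply, Pi.zero_apply]
      by_cases hi : i = u
      · simp [hB, isolate, hi]
      · simp [hB, isolate, hi, hne, hcol i hi]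
    refine ⟨⟨x, by simpa using hx⟩, ?_⟩
    change φ x = (a, b)
    rw [hφ]
    refine Prod.ext ?_ ?_
    · simp [x, hne.symm]
    · simp only [x, Matrix.mulVec_add, Matrix.mulVec_single, Pi.add_apply]
      simp [huu]
      field_simp
  have h1 := LinearMap.finrank_range_add_finrank_ker ψ
  have h2 : Module.finrank F (LinearMap.range ψ) = 2 := by
    rw [LinearMap.range_eq_top.mpr hsurj, finrank_top]
    simp
  have h3 : Module.finrank F (LinearMap.ker ψ) = Module.finrank F (LinearMap.ker A.mulVecLin) := by
    have : LinearMap.ker A.mulVecLin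
        = (LinearMap.ker ψ).map (LinearMap.ker B.mulVecLin).subtype := by
      rw [hker, LinearMap.ker_domRestrict, Submodule.map_comap_subtype]
    rw [this]
    exact (Submodule.finrank_map_subtype_eq _ _).symm
  have h4 := LinearMap.finrank_range_add_finrank_ker A.mulVecLin
  have h5 := LinearMap.finrank_range_add_finrank_ker B.mulVecLin
  simp only [Matrix.rank]
  omega

/-! ### Forests and trees -/

/-- For a forest, `k` is both the largest size of a matching and half the rank of every skew
matrix. -/
theorem exists_matching_rank {F : Type} [Field F] (hF : (2 : F) ≠ 0) {V : Type} [Fintype V]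
    (G : SimpleGraph V) (hG : G.IsAcyclic) :
    ∃ k : ℕ, (∃ M, IsMatchingSet G M ∧ M.ncard = k) ∧ (∀ M, IsMatchingSet G M → M.ncard ≤ k) ∧
      ∀ A : Matrix V V F, SkewDescribes F G A → A.rank = 2 * k := by
  induction hn : G.edgeSet.ncard using Nat.strong_induction_on generalizing G with
  | _ n ih =>
  by_cases hbot : G = ⊥
  · subst hbot
    refine ⟨0, ⟨∅, ⟨by simp, by simp⟩, by simp⟩, ?_, ?_⟩
    · intro M hM
      have : M = ∅ := by simpa using hM.1
      simp [this]
    · intro A hA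
      have : A = 0 := by
        ext i j
        exact hA.eq_zero_of_not_adj hF (by simp)
      simp [this]
  · obtain ⟨a, b, hab⟩ := SimpleGraph.ne_bot_iff_exists_adj.mp hbot
    obtain ⟨v, u, hvu, hv⟩ := exists_pendant hG hab
    have hlt : (G.deleteIncidenceSet u).edgeSet.ncard < n := by
      rw [← hn]
      refine Set.ncard_lt_ncard ⟨SimpleGraph.edgeSet_mono (G.deleteIncidenceSet_le u), ?_⟩
      intro h
      have := h (show s(v, u) ∈ G.edgeSet from hvu)
      rw [SimpleGraph.mem_edgeSet, SimpleGraph.deleteIncidenceSet_adj] at this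
      exact this.2.2 rfl
    obtain ⟨k, ⟨M, hM, hk⟩, hle, hrank⟩ :=
      ih _ hlt _ (hG.anti (G.deleteIncidenceSet_le u)) rfl
    refine ⟨k + 1, ⟨_, (hM.insert_pendant hvu hv).1, ?_⟩, ?_, ?_⟩
    · rw [(hM.insert_pendant hvu hv).2, hk]
    · intro N hN
      obtain ⟨N', hN', h⟩ := hN.ncard_le_deleteIncidenceSet u
      have := hle N' hN'
      omega
    · intro A hA
      rw [rank_eq_rank_isolate_add_two ((hA.2 u v hvu.ne').2 hvu.symm) ((hA.2 v u hvu.ne).2 hvu)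
        (hA.diag hF u) (fun w hw => hA.eq_zero_of_not_adj hF fun h => hw (hv w h))
        (fun w hw => hA.eq_zero_of_not_adj hF fun h => hw (hv w h.symm)),
        hrank _ (hA.isolate u)]
      ring

/-- For a tree `G` over a field of characteristic not `2`,
`mr⁻(F,G) = 2·match(G) = MR⁻(F,G)`. -/
theorem minSkewRank_of_tree (F : Type) [Field F] (hF : (2 : F) ≠ 0)
    {V : Type} [Fintype V] (G : SimpleGraph V) (htree : G.IsTree) :
    minSkewRank F G = 2 * matchingNumber G ∧
    2 * matchingNumber G = maxSkewRank F G := by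
  obtain ⟨k, hex, hle, hrank⟩ := exists_matching_rank hF G htree.isAcyclic
  have hm : matchingNumber G = k := by
    refine IsGreatest.csSup_eq ⟨hex, ?_⟩
    rintro _ ⟨M, hM, rfl⟩
    exact hle M hM
  have hset : {r : ℕ | ∃ A : Matrix V V F, SkewDescribes F G A ∧ A.rank = r} = {2 * k} := by
    ext r
    simp only [Set.mem_ofPred_eq, Set.mem_singleton_iff]
    constructor
    · rintro ⟨A, hA, rfl⟩
      exact hrank A hA
    · rintro rfl
      obtain ⟨A, hA⟩ := exists_skewDescribes F G
      exact ⟨A, hA, hrank A hA⟩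
  simp only [minSkewRank, maxSkewRank, hset, hm, csInf_singleton, csSup_singleton, and_self]
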